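/- Let $v_0,\dots,v_4$ be a generic $5$-tuple of vectors in $\mathbb{C}^3$ (i.e., every subset of at most $3$ of them is linearly independent), and let $L_i = \mathbb{C} v_i$ be the lines they span. Then there exist $5$ lines $\ell_0,\dots,\ell_4$ in $\mathbb{C}^2$ and surjective linear maps $f_i : \mathbb{C}^3 \to \mathbb{C}^2$ such that $f_i(L_i) = 0$ and $f_i(L_j) = \ell_j$ for all $j \neq i$. -/

import Mathlib

lemma aux_span {f : (Fin 3 → ℂ) →ₗ[ℂ] (Fin 2 → ℂ)} {x : Fin 3 → ℂ} {u : Fin 2 → ℂ} {c : ℂ}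
    (hc : c ≠ 0) (h : f x = c • u) :
    (Submodule.span ℂ {x}).map f = Submodule.span ℂ {u} := by
  rw [Submodule.map_span, Set.image_singleton, h]
  exact Submodule.span_singleton_smul_eq (IsUnit.mk0 c hc) u

lemma aux_surj {f : (Fin 3 → ℂ) →ₗ[ℂ] (Fin 2 → ℂ)} {x y : Fin 3 → ℂ} {c d s t : ℂ}
    (hc : c ≠ 0) (hd : d ≠ 0) (hst : s ≠ t)
    (hx : f x = c • ![1, -s]) (hy : f y = d • ![1, -t]) : Function.Surjective f := by
  intro w
  have h1 : s - t ≠ 0 := sub_ne_zero.2 hst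
  refine ⟨(-(w 1 + t * w 0) / (s - t) / c) • x + ((w 1 + s * w 0) / (s - t) / d) • y, ?_⟩
  rw [map_add, map_smul, map_smul, hx, hy]
  ext i
  fin_cases i
  · simp
    field_simp
    ring
  · simp
    field_simp
    ring

lemma aux_triple (v : Fin 5 → (Fin 3 → ℂ))
    (hgen : ∀ s : Finset (Fin 5), s.card ≤ 3 →
      LinearIndependent ℂ (fun i : {x // x ∈ s} => v i)) (t : Fin 3 → Fin 5)
    (ht : Function.Injective t) : LinearIndependent ℂ (fun i => v (t i)) := by
  have h := hgen (Finset.univ.image t) (by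
    refine Finset.card_image_le.trans ?_
    simp)
  exact h.comp (fun i => ⟨t i, by simp⟩) (fun i j hij => ht (by simpa using hij))

lemma aux_rel (v : Fin 5 → (Fin 3 → ℂ))
    (hgen : ∀ s : Finset (Fin 5), s.card ≤ 3 →
      LinearIndependent ℂ (fun i : {x // x ∈ s} => v i)) (i j k : Fin 5)
    (ht : Function.Injective ![i, j, k]) (y z : ℂ) : v i ≠ y • v j + z • v k := by
  intro h
  have h1 := aux_triple v hgen _ ht
  rw [Fintype.linearIndependent_iff] at h1
  have h2 := h1 ![1, -y, -z] (by simp [Fin.sum_univ_three, h]) 0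
  simp at h2

theorem stmt4 (v : Fin 5 → (Fin 3 → ℂ))
    (hgen : ∀ s : Finset (Fin 5), s.card ≤ 3 →
      LinearIndependent ℂ (fun i : {x // x ∈ s} => v i)) :
    ∃ (ℓ : Fin 5 → Submodule ℂ (Fin 2 → ℂ))
      (f : Fin 5 → ((Fin 3 → ℂ) →ₗ[ℂ] (Fin 2 → ℂ))),
      (∀ j, Module.finrank ℂ (ℓ j) = 1) ∧
      ∀ i, Function.Surjective (f i) ∧
        (Submodule.span ℂ {v i}).map (f i) = ⊥ ∧
        ∀ j, j ≠ i → (Submodule.span ℂ {v j}).map (f i) = ℓ j := by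
  have hli := aux_triple v hgen ![0, 1, 2] (by decide)
  let B := basisOfLinearIndependentOfCardEqFinrank hli (by simp)
  have hB : ∀ i, B i = v (![0, 1, 2] i) := fun i => by
    simp [B]
  have hB0 : B 0 = v 0 := hB 0
  have hB1 : B 1 = v 1 := hB 1
  have hB2 : B 2 = v 2 := hB 2
  have hrep : ∀ x, ∃ a b c : ℂ, x = a • v 0 + b • v 1 + c • v 2 := fun x =>
    ⟨B.repr x 0, B.repr x 1, B.repr x 2, by
      conv_lhs => rw [← B.sum_repr x]
      rw [Fin.sum_univ_three, hB0, hB1, hB2]⟩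
  obtain ⟨a, b, c, h3⟩ := hrep (v 3)
  obtain ⟨a', b', c', h4⟩ := hrep (v 4)
  have ha : a ≠ 0 := by
    rintro rfl
    exact aux_rel v hgen 3 1 2 (by decide) b c (by rw [h3]; module)
  have hb : b ≠ 0 := by
    rintro rfl
    exact aux_rel v hgen 3 0 2 (by decide) a c (by rw [h3]; module)
  have hc : c ≠ 0 := by
    rintro rfl
    exact aux_rel v hgen 3 0 1 (by decide) a b (by rw [h3]; module)
  obtain ⟨p, rfl⟩ : ∃ p, a' = p * a := ⟨a' / a, by field_simp⟩
  obtain ⟨q, rfl⟩ : ∃ p, b' = p * b := ⟨b' / b, by field_simp⟩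
  obtain ⟨r, rfl⟩ : ∃ p, c' = p * c := ⟨c' / c, by field_simp⟩
  have hp : p ≠ 0 := by
    rintro rfl
    exact aux_rel v hgen 4 1 2 (by decide) (q * b) (r * c) (by rw [h4]; module)
  have hq : q ≠ 0 := by
    rintro rfl
    exact aux_rel v hgen 4 0 2 (by decide) (p * a) (r * c) (by rw [h4]; module)
  have hr : r ≠ 0 := by
    rintro rfl
    exact aux_rel v hgen 4 0 1 (by decide) (p * a) (q * b) (by rw [h4]; module)
  have hpq : p ≠ q := by
    rintro rfl
    exact aux_rel v hgen 4 3 2 (by decide) p ((r - p) * c) (by rw [h4, h3]; module)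
  have hpr : p ≠ r := by
    rintro rfl
    exact aux_rel v hgen 4 3 1 (by decide) p ((q - p) * b) (by rw [h4, h3]; module)
  have hqr : q ≠ r := by
    rintro rfl
    exact aux_rel v hgen 4 3 0 (by decide) q ((p - q) * a) (by rw [h4, h3]; module)
  have hF : ∀ α β γ : ℂ, ∃ f : (Fin 3 → ℂ) →ₗ[ℂ] (Fin 2 → ℂ),
      f (v 0) = (α / a) • ![1, -p] ∧ f (v 1) = (β / b) • ![1, -q] ∧
      f (v 2) = (γ / c) • ![1, -r] ∧
      f (v 3) = ![α + β + γ, -(p * α + q * β + r * γ)] ∧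
      f (v 4) = ![p * α + q * β + r * γ, -(p ^ 2 * α + q ^ 2 * β + r ^ 2 * γ)] := by
    intro α β γ
    let f := B.constr ℂ ![(α / a) • ![1, -p], (β / b) • ![1, -q], (γ / c) • ![1, -r]]
    have e0 : f (v 0) = (α / a) • ![1, -p] := by
      rw [← hB0]; simp only [f, B.constr_basis]; rfl
    have e1 : f (v 1) = (β / b) • ![1, -q] := by
      rw [← hB1]; simp only [f, B.constr_basis]; rfl
    have e2 : f (v 2) = (γ / c) • ![1, -r] := by
      rw [← hB2]; simp only [f, B.constr_basis]; rfl
    refine ⟨f, e0, e1, e2, ?_, ?_⟩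
    · rw [h3]
      simp only [map_add, map_smul, e0, e1, e2]
      ext i
      fin_cases i <;> simp <;> field_simp <;> ring
    · rw [h4]
      simp only [map_add, map_smul, e0, e1, e2]
      ext i
      fin_cases i <;> simp <;> field_simp <;> ring
  have key : ∀ α β γ : ℂ, ∃ f : (Fin 3 → ℂ) →ₗ[ℂ] (Fin 2 → ℂ),
      f (v 0) = (α / a) • ![1, -p] ∧ f (v 1) = (β / b) • ![1, -q] ∧
      f (v 2) = (γ / c) • ![1, -r] ∧
      (p * α + q * β + r * γ = 0 → f (v 3) = (α + β + γ) • ![1, 0]) ∧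
      (p * α + q * β + r * γ = 0 → 
        f (v 4) = (-(p ^ 2 * α + q ^ 2 * β + r ^ 2 * γ)) • ![0, 1]) := by
    intro α β γ
    obtain ⟨f, e0, e1, e2, e3, e4⟩ := hF α β γ
    refine ⟨f, e0, e1, e2, fun h => ?_, fun h => ?_⟩
    · rw [e3, h]; simp
    · rw [e4, h]; simp
  have spq := sub_ne_zero.2 hpq
  have spr := sub_ne_zero.2 hpr.symm
  have sqr := sub_ne_zero.2 hqr
  obtain ⟨f0, a0, a1, a2, a3, a4⟩ := key 0 r (-q)
  obtain ⟨f1, b0, b1, b2, b3, b4⟩ := key r 0 (-p)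
  obtain ⟨f2, c0, c1, c2, c3, c4⟩ := key q (-p) 0
  obtain ⟨f3, d0, d1, d2, d3, d4⟩ := key (q - r) (r - p) (p - q)
  obtain ⟨f4, g0, g1, g2, g3, g4⟩ := key (q * r * (q - r)) (p * r * (r - p)) (p * q * (p - q))
  replace a3 := a3 (by ring)
  replace a4 := a4 (by ring)
  replace b3 := b3 (by ring)
  replace b4 := b4 (by ring)
  replace c3 := c3 (by ring)
  replace c4 := c4 (by ring)
  replace d3 := d3 (by ring)
  replace d4 := d4 (by ring)
  replace g3 := g3 (by ring)
  replace g4 := g4 (by ring)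
  rw [show 0 + r + -q = -(q - r) by ring] at a3
  rw [show -(p ^ 2 * 0 + q ^ 2 * r + r ^ 2 * -q) = -(q * r * (q - r)) by ring] at a4
  rw [show r + 0 + -p = r - p by ring] at b3
  rw [show -(p ^ 2 * r + q ^ 2 * 0 + r ^ 2 * -p) = p * r * (r - p) by ring] at b4
  rw [show q + -p + 0 = -(p - q) by ring] at c3
  rw [show -(p ^ 2 * q + q ^ 2 * -p + r ^ 2 * 0) = -(p * q * (p - q)) by ring] at c4
  rw [show q - r + (r - p) + (p - q) = 0 by ring, zero_smul] at d3
  rw [show -(p ^ 2 * (q - r) + q ^ 2 * (r - p) + r ^ 2 * (p - q))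
    = (p - q) * (q - r) * (r - p) by ring] at d4
  rw [show q * r * (q - r) + p * r * (r - p) + p * q * (p - q)
    = -((p - q) * (q - r) * (r - p)) by ring] at g3
  rw [show -(p ^ 2 * (q * r * (q - r)) + q ^ 2 * (p * r * (r - p)) + r ^ 2 * (p * q * (p - q)))
    = 0 by ring, zero_smul] at g4
  rw [zero_div, zero_smul] at a0 b1 c2
  have hbot : ∀ (f : (Fin 3 → ℂ) →ₗ[ℂ] (Fin 2 → ℂ)) (x : Fin 3 → ℂ), f x = 0 →
      (Submodule.span ℂ {x}).map f = ⊥ := by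
    intro f x h
    rw [Submodule.map_span, Set.image_singleton, h, Submodule.span_zero_singleton]
  refine ⟨![Submodule.span ℂ {![1, -p]}, Submodule.span ℂ {![1, -q]}, Submodule.span ℂ {![1, -r]},
    Submodule.span ℂ {![1, 0]}, Submodule.span ℂ {![0, 1]}], ![f0, f1, f2, f3, f4], ?_, ?_⟩
  · intro j
    fin_cases j <;> exact finrank_span_singleton (by simp)
  · intro i
    fin_cases i
    · refine ⟨aux_surj ?_ ?_ hqr a1 a2, hbot _ _ a0, ?_⟩
      · simp [*]
      · simp [*]
      intro j hj
      fin_cases j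
      · exact absurd rfl hj
      · exact aux_span (by simp [hr, hb]) a1
      · exact aux_span (by simp [hq, hc]) a2
      · exact aux_span (neg_ne_zero.2 sqr) a3
      · exact aux_span (neg_ne_zero.2 (mul_ne_zero (mul_ne_zero hq hr) sqr)) a4
    · refine ⟨aux_surj ?_ ?_ hpr b0 b2, hbot _ _ b1, ?_⟩
      · simp [*]
      · simp [*]
      intro j hj
      fin_cases j
      · exact aux_span (by simp [hr, ha]) b0
      · exact absurd rfl hj
      · exact aux_span (by simp [hp, hc]) b2
      · exact aux_span spr b3
      · exact aux_span (mul_ne_zero (mul_ne_zero hp hr) spr) b4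
    · refine ⟨aux_surj ?_ ?_ hpq c0 c1, hbot _ _ c2, ?_⟩
      · simp [*]
      · simp [*]
      intro j hj
      fin_cases j
      · exact aux_span (by simp [hq, ha]) c0
      · exact aux_span (by simp [hp, hb]) c1
      · exact absurd rfl hj
      · exact aux_span (neg_ne_zero.2 spq) c3
      · exact aux_span (neg_ne_zero.2 (mul_ne_zero (mul_ne_zero hp hq) spq)) c4
    · refine ⟨aux_surj (div_ne_zero sqr ha) (div_ne_zero spr hb) hpq d0 d1, hbot _ _ d3, ?_⟩
      intro j hj
      fin_cases j
      · exact aux_span (div_ne_zero sqr ha) d0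
      · exact aux_span (div_ne_zero spr hb) d1
      · exact aux_span (div_ne_zero spq hc) d2
      · exact absurd rfl hj
      · exact aux_span (mul_ne_zero (mul_ne_zero spq sqr) spr) d4
    · have k0 := div_ne_zero (mul_ne_zero (mul_ne_zero hq hr) sqr) ha
      have k1 := div_ne_zero (mul_ne_zero (mul_ne_zero hp hr) spr) hb
      have k2 := div_ne_zero (mul_ne_zero (mul_ne_zero hp hq) spq) hc
      refine ⟨aux_surj k0 k1 hpq g0 g1, hbot _ _ g4, ?_⟩
      intro j hj
      fin_cases j
      · exact aux_span k0 g0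
      · exact aux_span k1 g1
      · exact aux_span k2 g2
      · exact aux_span (neg_ne_zero.2 (mul_ne_zero (mul_ne_zero spq sqr) spr)) g3
      · exact absurd rfl hj
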